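/- arXiv:1609.08253 — 3 statements merged into one kernel-verified Lean document; each statement's English description precedes it below -/
import Mathlib

section
/- Let p be a prime, d ≥ 1, and let e₁ ≤ e₂ ≤ ⋯ ≤ e_d be positive integers. Let A = ∏_{i=1}^d ℤ/p^{e_i}ℤ and let R(A) be the set of integer d × d matrices M = (m_{ij}) such that p^{e_i − e_j} divides m_{ij} for all 1 ≤ j ≤ i ≤ d. Then R(A) is a subring of the d × d integer matrices, and for each M ∈ R(A) there is a unique additive endomorphism ψ(M) of A satisfying ψ(M)(π(a)) = π(M a) for all a ∈ ℤ^d, where π : ℤ^d → A is the componentwise reduction map a ↦ (a₁ mod p^{e₁}, …, a_d mod p^{e_d}); moreover, the map ψ : R(A) → End(A) is a surjective ring homomorphism. -/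
/-!
Let `π : G → A` be a surjection of abelian groups. An endomorphism of `G` descends along `π`
exactly when it preserves `ker π`, and then in a unique way; by uniqueness, descending is a ring
homomorphism into `End A`. When `G` is projective, every endomorphism `g` of `A` arises in this way,
since `g ∘ π` lifts through `π`. For `G = ℤ^ι` and `π` the reduction modulo `nᵢ` in the `i`-th
coordinate, `ker π` is generated by the multiples `nⱼ bⱼ` of the standard basis vectors, so a matrix
`M` preserves it exactly when `nᵢ ∣ mᵢⱼ nⱼ` for all `i, j`. For `nᵢ = p^{eᵢ}` this says
`p^{eᵢ - eⱼ} ∣ mᵢⱼ`, which is vacuous when `eᵢ ≤ eⱼ`.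
-/

namespace HillarRhea

section Descent

variable {G A : Type*} [AddCommGroup G] [AddCommGroup A]

/-- The ring of endomorphisms of `G` that preserve the kernel of `π`, that is, those that descend to
the image of `π`. -/
def kerStabilizer (π : G →+ A) : Subring (AddMonoid.End G) where
  carrier := {f | ∀ x ∈ π.ker, f x ∈ π.ker}
  mul_mem' hf hg x hx := hf _ (hg x hx)
  one_mem' _ hx := hx
  add_mem' hf hg x hx := add_mem (hf x hx) (hg x hx)
  zero_mem' _ _ := zero_mem _
  neg_mem' hf x hx := neg_mem (hf x hx)

variable {π : G →+ A}

lemma mem_kerStabilizer {f : AddMonoid.End G} :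
    f ∈ kerStabilizer π ↔ ∀ x ∈ π.ker, f x ∈ π.ker :=
  Iff.rfl

lemma mem_kerStabilizer_of_semiconj {f : AddMonoid.End G} {g : AddMonoid.End A}
    (h : ∀ x, g (π x) = π (f x)) : f ∈ kerStabilizer π := fun x hx ↦ by
  rw [AddMonoidHom.mem_ker, ← h, AddMonoidHom.mem_ker.1 hx, map_zero]

lemma end_ext_of_surjective (hπ : Function.Surjective π) {g g' : AddMonoid.End A}
    (h : ∀ x, g (π x) = g' (π x)) : g = g' :=
  (AddMonoidHom.cancel_right hπ).1 (AddMonoidHom.ext h)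

/-- The endomorphism of `A` induced along `π` by an endomorphism of `G` that preserves `ker π`. -/
noncomputable def descend (hπ : Function.Surjective π) (f : kerStabilizer π) : AddMonoid.End A :=
  π.liftOfSurjective hπ ⟨π.comp f.1, f.2⟩

lemma descend_apply (hπ : Function.Surjective π) (f : kerStabilizer π) (x : G) :
    descend hπ f (π x) = π (f.1 x) :=
  π.liftOfRightInverse_comp_apply _ _ _ x

/-- Descent along `π` as a ring homomorphism. -/
noncomputable def descendHom (hπ : Function.Surjective π) :
    kerStabilizer π →+* AddMonoid.End A where
  toFun := descend hπ
  map_one' := end_ext_of_surjective hπ fun x ↦ descend_apply hπ 1 x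
  map_mul' f g := end_ext_of_surjective hπ fun x ↦ calc
    descend hπ (f * g) (π x) = π (f.1 (g.1 x)) := descend_apply hπ (f * g) x
    _ = descend hπ f (descend hπ g (π x)) := by simp only [descend_apply]
  map_zero' := end_ext_of_surjective hπ fun x ↦ (descend_apply hπ 0 x).trans (map_zero π)
  map_add' f g := end_ext_of_surjective hπ fun x ↦ calc
    descend hπ (f + g) (π x) = π (f.1 x + g.1 x) := descend_apply hπ (f + g) x
    _ = descend hπ f (π x) + descend hπ g (π x) := by simp only [map_add, descend_apply]

lemma descendHom_surjective [Module.Projective ℤ G] (hπ : Function.Surjective π) :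
    Function.Surjective (descendHom hπ) := fun g ↦ by
  obtain ⟨f, hf⟩ := Module.projective_lifting_property π.toIntLinearMap
    (g.comp π).toIntLinearMap hπ
  have semiconj (x : G) : g (π x) = π (f x) := (LinearMap.congr_fun hf x).symm
  let f' : kerStabilizer π := ⟨f.toAddMonoidHom, mem_kerStabilizer_of_semiconj semiconj⟩
  exact ⟨f', end_ext_of_surjective hπ fun x ↦ (descend_apply hπ f' x).trans (semiconj x).symm⟩

end Descent

section Reduction

variable {ι : Type*}

/-- The componentwise reduction map `π : ℤ^ι → ∏ i, ℤ/nᵢℤ`; a modulus `0` gives a factor `ℤ`. -/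
def reduction (n : ι → ℕ) : (ι → ℤ) →+ ∀ i, ZMod (n i) :=
  AddMonoidHom.piMap fun i ↦ Int.castAddHom (ZMod (n i))

variable (n : ι → ℕ)

lemma reduction_surjective : Function.Surjective (reduction n) :=
  Function.Surjective.piMap fun _ ↦ ZMod.intCast_surjective

variable {n}

lemma mem_ker_reduction {a : ι → ℤ} : a ∈ (reduction n).ker ↔ ∀ i, (n i : ℤ) ∣ a i := by
  rw [AddMonoidHom.mem_ker, funext_iff]
  exact forall_congr' fun i ↦ ZMod.intCast_zmod_eq_zero_iff_dvd (a i) (n i)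

variable [Fintype ι] [DecidableEq ι]

variable (ι) in
/-- Integer matrices as endomorphisms of the group `ℤ^ι` of column vectors. -/
def matrixEquivEnd : Matrix ι ι ℤ ≃+* AddMonoid.End (ι → ℤ) :=
  Matrix.toLinAlgEquiv'.toRingEquiv.trans (addMonoidEndRingEquivInt (ι → ℤ)).symm

lemma matrixEquivEnd_apply (M : Matrix ι ι ℤ) (a : ι → ℤ) :
    matrixEquivEnd ι M a = M.mulVec a :=
  rfl

lemma matrixEquivEnd_mem_kerStabilizer_iff {M : Matrix ι ι ℤ} :
    matrixEquivEnd ι M ∈ kerStabilizer (reduction n) ↔ ∀ i j, (n i : ℤ) ∣ M i j * n j := by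
  simp only [mem_kerStabilizer, mem_ker_reduction, matrixEquivEnd_apply]
  constructor
  · intro hM i j
    have single_dvd (k : ι) : (n k : ℤ) ∣ Pi.single (M := fun _ ↦ ℤ) j (n j : ℤ) k := by
      obtain rfl | hkj := eq_or_ne k j
      · rw [Pi.single_eq_same]
      · rw [Pi.single_eq_of_ne hkj]
        exact dvd_zero _
    simpa [Matrix.mulVec_single] using hM _ single_dvd i
  · intro hM a ha i
    exact Finset.dvd_sum fun j _ ↦ (hM i j).trans (mul_dvd_mul_left _ (ha j))

end Reduction

lemma pow_dvd_mul_pow_iff {R : Type*} [CommMonoidWithZero R] [IsCancelMulZero R] {p : R}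
    (hp : p ≠ 0) {a b : ℕ} {m : R} : p ^ a ∣ m * p ^ b ↔ p ^ (a - b) ∣ m := by
  obtain hab | hba := le_total a b
  · simp only [Nat.sub_eq_zero_of_le hab, pow_zero, one_dvd, iff_true]
    exact (pow_dvd_pow p hab).mul_left m
  · rw [← Nat.sub_add_cancel hba, pow_add, Nat.add_sub_cancel]
    exact mul_dvd_mul_iff_right (pow_ne_zero b hp)

lemma forall_pow_dvd_mul_pow_iff {ι R : Type*} [LinearOrder ι] [CommMonoidWithZero R]
    [IsCancelMulZero R] {p : R} (hp : p ≠ 0) {e : ι → ℕ} (he : Monotone e) {M : Matrix ι ι R} :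
    (∀ i j, p ^ e i ∣ M i j * p ^ e j) ↔ ∀ i j, j ≤ i → p ^ (e i - e j) ∣ M i j := by
  simp only [pow_dvd_mul_pow_iff hp]
  refine ⟨fun h i j _ ↦ h i j, fun h i j ↦ ?_⟩
  obtain hji | hij := le_total j i
  · exact h i j hji
  · rw [Nat.sub_eq_zero_of_le (he hij), pow_zero]
    exact one_dvd _

end HillarRhea

open HillarRhea in
theorem hillar_rhea_endomorphisms_general {ι : Type*} [Fintype ι] [DecidableEq ι] (n : ι → ℕ) :
    ∃ R : Subring (Matrix ι ι ℤ),
      (∀ M : Matrix ι ι ℤ, M ∈ R ↔ ∀ i j, (n i : ℤ) ∣ M i j * n j) ∧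
      ∃ ψ : R →+* AddMonoid.End (∀ i, ZMod (n i)),
        (∀ (M : R) (a : ι → ℤ),
          ψ M (fun i ↦ (a i : ZMod (n i))) = fun i ↦ ((M.1.mulVec a i : ℤ) : ZMod (n i))) ∧
        (∀ (M : R) (g : AddMonoid.End (∀ i, ZMod (n i))),
          (∀ a : ι → ℤ,
            g (fun i ↦ (a i : ZMod (n i))) = fun i ↦ ((M.1.mulVec a i : ℤ) : ZMod (n i))) →
          g = ψ M) ∧
        Function.Surjective ψ := by
  have hπ := reduction_surjective n
  let R := (kerStabilizer (reduction n)).comap (matrixEquivEnd ι).toRingHom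
  let toStabilizer : R ≃+* kerStabilizer (reduction n) :=
    (matrixEquivEnd ι).restrict R _ fun _ ↦ Iff.rfl
  let ψ := (descendHom hπ).comp toStabilizer.toRingHom
  have ψ_apply (M : R) (a : ι → ℤ) : ψ M (reduction n a) = reduction n (M.1.mulVec a) :=
    descend_apply hπ (toStabilizer M) a
  exact ⟨R, fun _ ↦ matrixEquivEnd_mem_kerStabilizer_iff, ψ, ψ_apply,
    fun M g hg ↦ end_ext_of_surjective hπ fun a ↦ (hg a).trans (ψ_apply M a).symm,
    (descendHom_surjective hπ).comp toStabilizer.surjective⟩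

/-- Ranum; Hillar–Rhea: for `A = ∏ i, ℤ/p^{eᵢ}ℤ` with
`e₁ ≤ ⋯ ≤ e_d` positive, the set `R(A)` of integer matrices `(m_{ij})` with
`p^{eᵢ - eⱼ} ∣ m_{ij}` for all `j ≤ i` is a subring of the `d × d` integer
matrices, and the map `ψ` sending `M ∈ R(A)` to the unique additive endomorphism
of `A` with `ψ(M)(π a) = π (M a)` (where `π : ℤ^d → A` is componentwise reduction)
is a surjective ring homomorphism `R(A) → End(A)`. -/
theorem hillar_rhea_endomorphisms (p : ℕ) (hp : p.Prime) (d : ℕ) (hd : 1 ≤ d)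
    (e : Fin d → ℕ) (hpos : ∀ i, 0 < e i) (hmono : Monotone e) :
    ∃ R : Subring (Matrix (Fin d) (Fin d) ℤ),
      (∀ M : Matrix (Fin d) (Fin d) ℤ,
        M ∈ R ↔ ∀ i j : Fin d, j ≤ i → (p : ℤ) ^ (e i - e j) ∣ M i j) ∧
      ∃ ψ : R →+* AddMonoid.End (∀ i : Fin d, ZMod (p ^ e i)),
        (∀ (M : R) (a : Fin d → ℤ),
          ψ M (fun i => ((a i : ZMod (p ^ e i)))) =
            fun i => (( (Matrix.mulVec (M : Matrix (Fin d) (Fin d) ℤ) a) i : ZMod (p ^ e i)))) ∧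
        (∀ (M : R) (g : AddMonoid.End (∀ i : Fin d, ZMod (p ^ e i))),
          (∀ a : Fin d → ℤ,
            g (fun i => ((a i : ZMod (p ^ e i)))) =
              fun i => (( (Matrix.mulVec (M : Matrix (Fin d) (Fin d) ℤ) a) i : ZMod (p ^ e i)))) →
          g = ψ M) ∧
        Function.Surjective ψ := by
  obtain ⟨R, mem_R, hψ⟩ := hillar_rhea_endomorphisms_general fun i ↦ p ^ e i
  have hp₀ : (p : ℤ) ≠ 0 := Nat.cast_ne_zero.2 hp.ne_zero
  simp only [Nat.cast_pow, HillarRhea.forall_pow_dvd_mul_pow_iff hp₀ hmono] at mem_R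
  exact ⟨R, mem_R, hψ⟩
end

section
/- Let p be a prime, d ≥ 1, and let e₁ ≤ e₂ ≤ ⋯ ≤ e_d be positive integers. Let A = ∏_{i=1}^d ℤ/p^{e_i}ℤ, let R(A) be the ring of integer d × d matrices (m_{ij}) with p^{e_i − e_j} ∣ m_{ij} for all j ≤ i, and let ψ : R(A) → End(A) be the surjective ring homomorphism with ψ(M)(π(a)) = π(M a) for all a ∈ ℤ^d, where π : ℤ^d → A is componentwise reduction. Then for M ∈ R(A), the endomorphism ψ(M) is an automorphism of A if and only if the matrix M reduced entrywise modulo p is invertible over the field ℤ/pℤ, i.e. det(M mod p) ≠ 0 in ℤ/pℤ. -/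
/-!
A surjective endomorphism of a finitely generated abelian group is bijective, so only surjectivity
matters. Surjectivity of the map that `M` induces on `∏ i, ℤ/nᵢℤ` says that every system
`(M b)ᵢ ≡ aᵢ (mod nᵢ)` is solvable; hence it is inherited by moduli dividing the `nᵢ`. Comparing
with the constant moduli `p ∣ p ^ eᵢ ∣ p ^ ∑ eⱼ`, where surjectivity means that `det M` is a unit,
sandwiches `A` between two conditions on `det M` that agree, since an integer is a unit modulo `p`
if and only if it is one modulo a power of `p`.
-/

open Function

theorem bijective_iff_surjective_of_finite_int {A : Type*} [AddCommGroup A] [Module.Finite ℤ A]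
    (f : AddMonoid.End A) : Bijective f ↔ Surjective f :=
  ⟨Bijective.surjective,
    OrzechProperty.bijective_of_surjective_endomorphism (AddMonoidHom.toIntLinearMap f)⟩

theorem finite_int_zmod (n : ℕ) : Module.Finite ℤ (ZMod n) :=
  .of_surjective (Int.castAddHom (ZMod n)).toIntLinearMap ZMod.intCast_surjective

section InducedMaps

variable {ι : Type*}

/-- The map `π : ℤ^ι → ∏ i, ℤ/nᵢℤ` reducing the `i`-th coordinate modulo `n i`. That a map `f` is
induced by `g : ℤ^ι → ℤ^ι` is expressed by `Function.Semiconj (residueVec n) g f`. -/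
def residueVec (n : ι → ℕ) (a : ι → ℤ) (i : ι) : ZMod (n i) := a i

theorem residueVec_surjective (n : ι → ℕ) : Surjective (residueVec n) :=
  Surjective.piMap fun _ => ZMod.intCast_surjective

theorem residueVec_eq_iff_modEq {n : ι → ℕ} {a b : ι → ℤ} :
    residueVec n a = residueVec n b ↔ ∀ i, a i ≡ b i [ZMOD n i] := by
  simp only [funext_iff, residueVec, ZMod.intCast_eq_intCast_iff]

theorem surjective_iff_exists_modEq_of_semiconj {n : ι → ℕ} {g : (ι → ℤ) → ι → ℤ}
    {f : (∀ i, ZMod (n i)) → ∀ i, ZMod (n i)} (hf : Semiconj (residueVec n) g f) :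
    Surjective f ↔ ∀ a : ι → ℤ, ∃ b, ∀ i, g b i ≡ a i [ZMOD n i] := by
  have hπ := residueVec_surjective n
  simp only [Surjective, hπ.forall, hπ.exists, ← hf.eq, residueVec_eq_iff_modEq]

theorem surjective_of_semiconj_of_dvd {m n : ι → ℕ} {g : (ι → ℤ) → ι → ℤ}
    {f : (∀ i, ZMod (n i)) → ∀ i, ZMod (n i)} {f' : (∀ i, ZMod (m i)) → ∀ i, ZMod (m i)}
    (hf : Semiconj (residueVec n) g f) (hf' : Semiconj (residueVec m) g f')
    (hmn : ∀ i, m i ∣ n i) (hsurj : Surjective f) : Surjective f' := by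
  rw [surjective_iff_exists_modEq_of_semiconj hf] at hsurj
  refine (surjective_iff_exists_modEq_of_semiconj hf').2 fun a => ?_
  obtain ⟨b, hb⟩ := hsurj a
  exact ⟨b, fun i => (hb i).of_dvd (Int.natCast_dvd_natCast.2 (hmn i))⟩

end InducedMaps

section Matrices

variable {ι : Type*} [Fintype ι]

theorem semiconj_residueVec_mulVec (M : Matrix ι ι ℤ) (m : ℕ) :
    Semiconj (residueVec fun _ => m) M.mulVec (M.map (Int.cast : ℤ → ZMod m)).mulVec := fun a =>
  funext fun i => RingHom.map_mulVec (Int.castRingHom (ZMod m)) M a i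

variable [DecidableEq ι]

theorem surjective_mulVec_iff_isUnit_det {R : Type*} [CommRing R] {M : Matrix ι ι R} :
    Surjective M.mulVec ↔ IsUnit M.det := by
  rw [Matrix.mulVec_surjective_iff_isUnit, Matrix.isUnit_iff_isUnit_det]

theorem isUnit_det_map_intCast_iff_isCoprime {M : Matrix ι ι ℤ} {m : ℕ} :
    IsUnit (M.map (Int.cast : ℤ → ZMod m)).det ↔ IsCoprime (m : ℤ) M.det := by
  rw [← ZMod.coe_int_isUnit_iff_isCoprime, Int.cast_det]

theorem isUnit_det_map_intCast_pow {M : Matrix ι ι ℤ} {m : ℕ}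
    (h : IsUnit (M.map (Int.cast : ℤ → ZMod m)).det) (k : ℕ) :
    IsUnit (M.map (Int.cast : ℤ → ZMod (m ^ k))).det := by
  rw [isUnit_det_map_intCast_iff_isCoprime] at h ⊢
  exact_mod_cast h.pow_left

theorem hillar_rhea_automorphism_criterion_general {p : ℕ} {e : ι → ℕ} (he : ∀ i, e i ≠ 0)
    {M : Matrix ι ι ℤ} {f : AddMonoid.End (∀ i, ZMod (p ^ e i))}
    (hf : Semiconj (residueVec fun i => p ^ e i) M.mulVec f) :
    Bijective f ↔ IsUnit (M.map (Int.cast : ℤ → ZMod p)).det := by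
  have hdvd (i : ι) : p ^ e i ∣ p ^ ∑ j, e j :=
    pow_dvd_pow p (Finset.single_le_sum_of_canonicallyOrdered (Finset.mem_univ i))
  have (i : ι) : Module.Finite ℤ (ZMod (p ^ e i)) := finite_int_zmod _
  rw [bijective_iff_surjective_of_finite_int]
  constructor <;> intro h
  · exact surjective_mulVec_iff_isUnit_det.1 <| surjective_of_semiconj_of_dvd hf
      (semiconj_residueVec_mulVec M p) (fun i => dvd_pow_self p (he i)) h
  · exact surjective_of_semiconj_of_dvd (semiconj_residueVec_mulVec M (p ^ ∑ j, e j)) hf hdvd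
      (surjective_mulVec_iff_isUnit_det.2 (isUnit_det_map_intCast_pow h _))

end Matrices

/-- Ranum; Hillar–Rhea: with `A = ∏ i, ℤ/p^{eᵢ}ℤ`, `R(A)` the ring of
integer matrices `(m_{ij})` with `p^{eᵢ - eⱼ} ∣ m_{ij}` for `j ≤ i`, and
`ψ : R(A) → End(A)` the surjective ring homomorphism determined by
`ψ(M)(π a) = π (M a)`, an endomorphism `ψ(M)` is an automorphism of `A` if and only
if `M` reduced entrywise mod `p` is invertible over `ℤ/pℤ`, i.e. `det (M mod p) ≠ 0`. -/
theorem hillar_rhea_automorphism_criterion (p : ℕ) (hp : p.Prime) (d : ℕ) (hd : 1 ≤ d)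
    (e : Fin d → ℕ) (hpos : ∀ i, 0 < e i) (hmono : Monotone e)
    (R : Subring (Matrix (Fin d) (Fin d) ℤ))
    (hR : ∀ M : Matrix (Fin d) (Fin d) ℤ,
      M ∈ R ↔ ∀ i j : Fin d, j ≤ i → (p : ℤ) ^ (e i - e j) ∣ M i j)
    (ψ : R →+* AddMonoid.End (∀ i : Fin d, ZMod (p ^ e i)))
    (hψ : ∀ (M : R) (a : Fin d → ℤ),
      ψ M (fun i => ((a i : ZMod (p ^ e i)))) =
        fun i => (((Matrix.mulVec (M : Matrix (Fin d) (Fin d) ℤ) a) i : ZMod (p ^ e i))))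
    (hψsurj : Function.Surjective ψ)
    (M : R) :
    Function.Bijective (ψ M) ↔
      Matrix.det ((M : Matrix (Fin d) (Fin d) ℤ).map (fun x : ℤ => (x : ZMod p))) ≠ 0 := by
  have : Fact p.Prime := ⟨hp⟩
  exact (hillar_rhea_automorphism_criterion_general (fun i => (hpos i).ne')
    fun a => (hψ M a).symm).trans isUnit_iff_ne_zero
end

section
/- Let G and H be finite groups whose orders are coprime. Then the automorphism group of the direct product G × H is isomorphic to the direct product Aut(G) × Aut(H) of the automorphism groups; the isomorphism sends a pair (α, β) to the automorphism (g, h) ↦ (α g, β h), and every automorphism of G × H is of this form. -/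
/-!
Homomorphisms between groups of coprime orders are trivial, since the order of a value divides both
group orders. Hence an endomorphism of `G × H` has no off-diagonal components `G → H` and `H → G`:
it is a product `a × b` of endomorphisms of `G` and `H`, and such a product is bijective only if
both factors are.
-/

theorem subsingleton_monoidHom_of_coprime_natCard {G H : Type*} [Group G] [Group H]
    (hcop : Nat.Coprime (Nat.card G) (Nat.card H)) : Subsingleton (G →* H) := by
  refine subsingleton_of_forall_eq 1 fun f => MonoidHom.ext fun g => ?_
  have orderOf_dvd_card_left : orderOf (f g) ∣ Nat.card G :=
    (orderOf_map_dvd f g).trans (orderOf_dvd_natCard g)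
  have orderOf_dvd_card_right : orderOf (f g) ∣ Nat.card H := orderOf_dvd_natCard (f g)
  exact orderOf_eq_one_iff.mp
    (Nat.eq_one_of_dvd_coprimes hcop orderOf_dvd_card_left orderOf_dvd_card_right)

theorem exists_eq_prodMap_of_subsingleton_monoidHom {M N M' N' : Type*}
    [MulOneClass M] [MulOneClass N] [MulOneClass M'] [MulOneClass N']
    [Subsingleton (M →* N')] [Subsingleton (N →* M')] (f : M × N →* M' × N') :
    ∃ (a : M →* M') (b : N →* N'), f = a.prodMap b := by
  let a : M →* M' := (MonoidHom.fst M' N').comp (f.comp (MonoidHom.inl M N))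
  let b : N →* N' := (MonoidHom.snd M' N').comp (f.comp (MonoidHom.inr M N))
  have snd_comp_inl : (MonoidHom.snd M' N').comp (f.comp (MonoidHom.inl M N)) = 1 :=
    Subsingleton.elim _ _
  have fst_comp_inr : (MonoidHom.fst M' N').comp (f.comp (MonoidHom.inr M N)) = 1 :=
    Subsingleton.elim _ _
  have apply_inl (m : M) : f (m, 1) = (a m, 1) := Prod.ext rfl (DFunLike.congr_fun snd_comp_inl m)
  have apply_inr (n : N) : f (1, n) = (1, b n) := Prod.ext (DFunLike.congr_fun fst_comp_inr n) rfl
  refine ⟨a, b, MonoidHom.ext fun ⟨m, n⟩ => ?_⟩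
  calc f (m, n) = f (m, 1) * f (1, n) := by rw [← map_mul, Prod.fst_mul_snd (m, n)]
    _ = (a m, b n) := by rw [apply_inl, apply_inr, Prod.fst_mul_snd (a m, b n)]

/-- The homomorphism `Aut M × Aut N → Aut (M × N)` letting a pair of automorphisms act
componentwise, analogous to `Equiv.Perm.sumCongrHom`; it serves as the isomorphism of the
theorem. -/
def mulAutProdCongrHom (M N : Type*) [MulOneClass M] [MulOneClass N] :
    MulAut M × MulAut N →* MulAut (M × N) where
  toFun p := p.1.prodCongr p.2
  map_one' := rfl
  map_mul' _ _ := rfl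

theorem mulAutProdCongrHom_injective (M N : Type*) [MulOneClass M] [MulOneClass N] :
    Function.Injective (mulAutProdCongrHom M N) := by
  rintro ⟨α, β⟩ ⟨α', β'⟩ h
  have apply_eq (m : M) (n : N) : (α m, β n) = (α' m, β' n) := DFunLike.congr_fun h (m, n)
  exact Prod.ext (MulEquiv.ext fun m => congrArg Prod.fst (apply_eq m 1))
    (MulEquiv.ext fun n => congrArg Prod.snd (apply_eq 1 n))

theorem mulAutProdCongrHom_surjective (M N : Type*) [MulOneClass M] [MulOneClass N]
    [Subsingleton (M →* N)] [Subsingleton (N →* M)] :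
    Function.Surjective (mulAutProdCongrHom M N) := by
  intro φ
  obtain ⟨a, b, hφ⟩ := exists_eq_prodMap_of_subsingleton_monoidHom φ.toMonoidHom
  have coe_φ : ⇑φ = Prod.map a b := congrArg DFunLike.coe hφ
  obtain ⟨ha, hb⟩ := Prod.map_bijective.mp (coe_φ ▸ φ.bijective)
  exact ⟨(MulEquiv.ofBijective a ha, MulEquiv.ofBijective b hb), DFunLike.coe_injective coe_φ.symm⟩

theorem aut_prod_of_coprime_general {M N : Type*} [MulOneClass M] [MulOneClass N]
    [Subsingleton (M →* N)] [Subsingleton (N →* M)] :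
    ∃ Φ : MulAut M × MulAut N ≃* MulAut (M × N),
      ∀ (α : MulAut M) (β : MulAut N) (m : M) (n : N),
        Φ (α, β) (m, n) = (α m, β n) :=
  ⟨MulEquiv.ofBijective (mulAutProdCongrHom M N)
    ⟨mulAutProdCongrHom_injective M N, mulAutProdCongrHom_surjective M N⟩, fun _ _ _ _ => rfl⟩

/-- If `G` and `H` are finite groups of coprime orders, then
`Aut(G × H) ≅ Aut(G) × Aut(H)`, via the isomorphism sending `(α, β)` to the
automorphism `(g, h) ↦ (α g, β h)`; surjectivity of this isomorphism says that
every automorphism of `G × H` has this form. -/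
theorem aut_prod_of_coprime {G H : Type*} [Group G] [Group H] [Finite G] [Finite H]
    (hcop : Nat.Coprime (Nat.card G) (Nat.card H)) :
    ∃ Φ : MulAut G × MulAut H ≃* MulAut (G × H),
      ∀ (α : MulAut G) (β : MulAut H) (g : G) (h : H),
        Φ (α, β) (g, h) = (α g, β h) := by
  have := subsingleton_monoidHom_of_coprime_natCard hcop
  have := subsingleton_monoidHom_of_coprime_natCard hcop.symm
  exact aut_prod_of_coprime_general
end
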